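/- arXiv:2206.05153 — 2 statements merged into one kernel-verified Lean document; each statement's English description precedes it below -/
import Mathlib

section
/- (Remark 2.3, nonsingularity of the preconditioned system) If A_0 is invertible and the truncated matrix polynomial A_m(μ) = Σ_{ℓ=0}^m μ^ℓ A_ℓ is invertible, then the right-preconditioned system matrix I − μ M_m K_m⁻¹ ∈ ℝ^{(m+1)n×(m+1)n} is invertible. -/
/-!
The matrix factors as `I - μ M K⁻¹ = (K - μ M) K⁻¹`, so it suffices that `K` and `K - μ M` are
invertible. If `(K - μ M) v = 0`, the block rows `ℓ ≥ 1` read `v_ℓ = μ v_{ℓ-1}`, hence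
`v_ℓ = μ ^ ℓ v_0`, and block row `0` becomes `A_m(μ) v_0 = 0`. Invertibility of `A_m(μ)` therefore
gives that of `K - μ M` (`isUnit_Kmat_sub_smul_Mmat`). Invertibility of `K` is the case `μ = 0` of
the same lemma, because `A_m(0) = A_0`.
-/

open Matrix

/-- The companion matrix `K_m`: `(0,ℓ)` block is `A_ℓ`, `(ℓ,ℓ)` block is `I` for `ℓ ≥ 1`,
all other blocks zero. -/
def Kmat (n m : ℕ) (A : Fin (m + 1) → Matrix (Fin n) (Fin n) ℝ) :
    Matrix (Fin (m + 1) × Fin n) (Fin (m + 1) × Fin n) ℝ :=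
  fun p q =>
    if p.1 = 0 then A q.1 p.2 q.2
    else if p.1 = q.1 then (if p.2 = q.2 then 1 else 0) else 0

/-- The companion matrix `M_m`: `(ℓ+1,ℓ)` block is `I` for `ℓ = 0,…,m-1`, all other blocks zero. -/
def Mmat (n m : ℕ) : Matrix (Fin (m + 1) × Fin n) (Fin (m + 1) × Fin n) ℝ :=
  fun p q =>
    if (p.1 : ℕ) = (q.1 : ℕ) + 1 then (if p.2 = q.2 then 1 else 0) else 0

lemma Kmat_mulVec_zero (n m : ℕ) (A : Fin (m + 1) → Matrix (Fin n) (Fin n) ℝ)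
    (v : Fin (m + 1) × Fin n → ℝ) (i : Fin n) :
    (Kmat n m A *ᵥ v) (0, i) = ∑ ℓ, ∑ j, A ℓ i j * v (ℓ, j) := by
  simp [Matrix.mulVec, dotProduct, Kmat, Fintype.sum_prod_type]

lemma Kmat_mulVec_succ (n m : ℕ) (A : Fin (m + 1) → Matrix (Fin n) (Fin n) ℝ)
    (v : Fin (m + 1) × Fin n → ℝ) (k : Fin m) (i : Fin n) :
    (Kmat n m A *ᵥ v) (k.succ, i) = v (k.succ, i) := by
  have h : ∀ q : Fin (m + 1) × Fin n,
      Kmat n m A (k.succ, i) q * v q = if q = (k.succ, i) then v q else 0 := by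
    rintro ⟨l, j⟩
    simp only [Kmat, Fin.succ_ne_zero, if_false, Prod.mk.injEq]
    split_ifs <;> simp_all
  simp [Matrix.mulVec, dotProduct, h]

lemma Mmat_mulVec_zero (n m : ℕ) (v : Fin (m + 1) × Fin n → ℝ) (i : Fin n) :
    (Mmat n m *ᵥ v) (0, i) = 0 := by
  simp [Matrix.mulVec, dotProduct, Mmat]

lemma Mmat_mulVec_succ (n m : ℕ) (v : Fin (m + 1) × Fin n → ℝ) (k : Fin m) (i : Fin n) :
    (Mmat n m *ᵥ v) (k.succ, i) = v (k.castSucc, i) := by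
  have h : ∀ q : Fin (m + 1) × Fin n,
      Mmat n m (k.succ, i) q * v q = if q = (k.castSucc, i) then v q else 0 := by
    rintro ⟨l, j⟩
    simp only [Mmat, Fin.val_succ, Prod.mk.injEq, Fin.ext_iff, Fin.val_castSucc]
    split_ifs <;> first | omega | simp
  simp [Matrix.mulVec, dotProduct, h]

/-- The companion pencil `K - μ M` is invertible wherever the matrix polynomial is. -/
lemma isUnit_Kmat_sub_smul_Mmat (n m : ℕ) (A : Fin (m + 1) → Matrix (Fin n) (Fin n) ℝ) (μ : ℝ)
    (hAmu : IsUnit (∑ ℓ : Fin (m + 1), μ ^ (ℓ : ℕ) • A ℓ)) :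
    IsUnit (Kmat n m A - μ • Mmat n m) := by
  rw [← Matrix.mulVec_injective_iff_isUnit] at hAmu ⊢
  refine (injective_iff_map_eq_zero (Matrix.mulVecLin (Kmat n m A - μ • Mmat n m))).2 ?_
  intro v hv
  have hrow : ∀ p, (Kmat n m A *ᵥ v) p - μ * (Mmat n m *ᵥ v) p = 0 := by
    intro p
    have := congrFun hv p
    simpa [Matrix.sub_mulVec, Matrix.smul_mulVec] using this
  have hpow : ∀ (ℓ : Fin (m + 1)) (i : Fin n), v (ℓ, i) = μ ^ (ℓ : ℕ) * v (0, i) := by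
    intro ℓ i
    induction ℓ using Fin.induction with
    | zero => simp
    | succ k ih =>
      have h := hrow (k.succ, i)
      rw [Kmat_mulVec_succ, Mmat_mulVec_succ, ih] at h
      rw [Fin.val_succ, pow_succ]
      rw [Fin.val_castSucc] at h
      linarith
  have h0 : (fun i => v (0, i)) = 0 := by
    apply hAmu
    rw [Matrix.mulVec_zero]
    ext i
    have h := hrow (0, i)
    rw [Kmat_mulVec_zero, Mmat_mulVec_zero, mul_zero, sub_zero] at h
    rw [Pi.zero_apply, ← h]
    simp only [Matrix.mulVec, dotProduct, Matrix.sum_apply, Matrix.smul_apply, smul_eq_mul,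
      Finset.sum_mul]
    rw [Finset.sum_comm]
    refine Finset.sum_congr rfl fun ℓ _ => Finset.sum_congr rfl fun j _ => ?_
    rw [hpow ℓ j]
    ring
  ext ⟨ℓ, i⟩
  rw [hpow, congrFun h0 i]
  simp

/-- Remark 2.3: if `A_0` and the truncated matrix polynomial `A_m(μ)` are invertible, then the
right-preconditioned system matrix `I - μ M_m K_m⁻¹` is invertible. -/
theorem preconditioned_system_nonsingular (n m : ℕ) (hn : 1 ≤ n) (hm : 1 ≤ m)
    (A : Fin (m + 1) → Matrix (Fin n) (Fin n) ℝ) (μ : ℝ)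
    (hA0 : IsUnit (A 0))
    (hAmu : IsUnit (∑ ℓ : Fin (m + 1), μ ^ (ℓ : ℕ) • A ℓ)) :
    IsUnit (1 - μ • (Mmat n m * (Kmat n m A)⁻¹)) := by
  have hK : IsUnit (Kmat n m A) := by
    have h := isUnit_Kmat_sub_smul_Mmat n m A 0 (by simpa [Fin.sum_univ_succ] using hA0)
    simpa using h
  have hfac : 1 - μ • (Mmat n m * (Kmat n m A)⁻¹)
      = (Kmat n m A - μ • Mmat n m) * (Kmat n m A)⁻¹ := by
    rw [Matrix.sub_mul, Matrix.smul_mul,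
      Matrix.mul_nonsing_inv _ ((Matrix.isUnit_iff_isUnit_det _).1 hK)]
  rw [hfac]
  exact (isUnit_Kmat_sub_smul_Mmat n m A μ hAmu).mul (Matrix.isUnit_nonsing_inv_iff.2 hK)
end

section
/- (Theorem 3.1, growth of the nonzero block structure) Let B_1, …, B_i be arbitrary real n×n matrices with 1 ≤ i ≤ m. Then the vector v^{(i)} := (M_m · K̃⁻¹(B_i)) ⋯ (M_m · K̃⁻¹(B_1)) · c_m ∈ ℝ^{(m+1)n}, obtained by i successive applications of the (possibly varying) inexactly preconditioned operator to the starting vector c_m, has block 0 equal to zero and blocks i+1, …, m equal to zero; i.e., only blocks 1 through i of v^{(i)} can be nonzero, so the nonzero structure grows by at most one block per application. -/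
/-!
The preconditioner `K̃⁻¹(B)` modifies only block `0` of a vector, whatever `B` is, while `M_m`
shifts every block down by one and puts zero in block `0`. Hence one application of `M_m K̃⁻¹(B)`
sends a vector supported on blocks `0, …, k` to one supported on blocks `1, …, k + 1`.
Induction on the number of factors, starting from `c_m` (supported on block `0`), gives
the bound on the last nonzero block (`prod_mulVec_support`); block `0` vanishes because the leftmost
factor is `M_m` (`Mmat_mulVec_block_zero`).
-/

open Matrix

/-- The inexact preconditioner `K̃⁻¹(B)`: `(0,0)` block `B`, `(0,ℓ)` block `-B·A_ℓ` for `ℓ ≥ 1`,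
`(ℓ,ℓ)` block `I` for `ℓ ≥ 1`, all other blocks zero. -/
def KtildeInv (n m : ℕ) (A : Fin (m + 1) → Matrix (Fin n) (Fin n) ℝ)
    (B : Matrix (Fin n) (Fin n) ℝ) :
    Matrix (Fin (m + 1) × Fin n) (Fin (m + 1) × Fin n) ℝ :=
  fun p q =>
    if p.1 = 0 then (if q.1 = 0 then B p.2 q.2 else (-(B * A q.1)) p.2 q.2)
    else if p.1 = q.1 then (if p.2 = q.2 then 1 else 0) else 0

/-- The block vector `c_m` with `0`th block `b` and all other blocks zero. -/
def cvec (n m : ℕ) (b : Fin n → ℝ) : Fin (m + 1) × Fin n → ℝ :=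
  fun p => if p.1 = 0 then b p.2 else 0

/-- Block `0` of `M_m w` vanishes, since the block row `0` of `M_m` is zero. -/
lemma Mmat_mulVec_block_zero (n m : ℕ) (w : Fin (m + 1) × Fin n → ℝ)
    (p : Fin (m + 1) × Fin n) (hp : (p.1 : ℕ) = 0) : (Mmat n m).mulVec w p = 0 := by
  refine Finset.sum_eq_zero fun q _ => ?_
  have h : ¬ (p.1 : ℕ) = (q.1 : ℕ) + 1 := by omega
  simp [Mmat, h]

lemma Mmat_mulVec_support (n m k : ℕ) (w : Fin (m + 1) × Fin n → ℝ)
    (hw : ∀ q : Fin (m + 1) × Fin n, k < (q.1 : ℕ) → w q = 0)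
    (p : Fin (m + 1) × Fin n) (hp : k + 1 < (p.1 : ℕ)) : (Mmat n m).mulVec w p = 0 := by
  refine Finset.sum_eq_zero fun q _ => ?_
  by_cases h : (p.1 : ℕ) = (q.1 : ℕ) + 1
  · rw [hw q (by omega), mul_zero]
  · simp [Mmat, h]

/-- Below block row `0` the preconditioner acts as the identity, so it cannot enlarge the set of
leading blocks outside which a vector vanishes. -/
lemma KtildeInv_mulVec_support (n m k : ℕ) (A : Fin (m + 1) → Matrix (Fin n) (Fin n) ℝ)
    (B : Matrix (Fin n) (Fin n) ℝ) (v : Fin (m + 1) × Fin n → ℝ)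
    (hv : ∀ q : Fin (m + 1) × Fin n, k < (q.1 : ℕ) → v q = 0)
    (p : Fin (m + 1) × Fin n) (hp : k < (p.1 : ℕ)) : (KtildeInv n m A B).mulVec v p = 0 := by
  refine Finset.sum_eq_zero fun q _ => ?_
  have h0 : p.1 ≠ 0 := by
    intro h
    simp [h] at hp
  by_cases h : p.1 = q.1
  · rw [hv q (h ▸ hp), mul_zero]
  · simp [KtildeInv, h0, h]

/-- Only blocks `0, …, i` can be nonzero after `i` applications; unlike in the final result,
`i = 0` is allowed, which is where the induction starts. -/
lemma prod_mulVec_support (n m : ℕ) (A : Fin (m + 1) → Matrix (Fin n) (Fin n) ℝ)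
    (b : Fin n → ℝ) (i : ℕ) (B : Fin i → Matrix (Fin n) (Fin n) ℝ) :
    ∀ p : Fin (m + 1) × Fin n, i < (p.1 : ℕ) →
      (((List.ofFn fun t : Fin i => Mmat n m * KtildeInv n m A (B t)).reverse.prod).mulVec
        (cvec n m b)) p = 0 := by
  induction i with
  | zero =>
    intro p hp
    have h0 : p.1 ≠ 0 := by
      intro h
      simp [h] at hp
    simp [cvec, h0]
  | succ i ih =>
    intro p hp
    rw [List.ofFn_succ', List.concat_eq_append, List.reverse_append, List.reverse_singleton,
      List.singleton_append, List.prod_cons, ← mulVec_mulVec, ← mulVec_mulVec]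
    exact Mmat_mulVec_support n m i _
      (KtildeInv_mulVec_support n m i A _ _ (ih fun t => B t.castSucc)) p hp

/-- Theorem 3.1: after `i` applications of the (possibly varying) inexactly preconditioned
operators `M_m K̃⁻¹(B_t)` to the starting vector `c_m`, block `0` is zero and all blocks beyond
block `i` are zero: the nonzero structure grows by at most one block per application. -/
theorem nonzero_structure_growth (n m i : ℕ) (hn : 1 ≤ n) (hm : 1 ≤ m)
    (hi1 : 1 ≤ i) (him : i ≤ m)
    (A : Fin (m + 1) → Matrix (Fin n) (Fin n) ℝ) (b : Fin n → ℝ)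
    (B : Fin i → Matrix (Fin n) (Fin n) ℝ) :
    ∀ p : Fin (m + 1) × Fin n, ((p.1 : ℕ) = 0 ∨ i < (p.1 : ℕ)) →
      (((List.ofFn fun t : Fin i => Mmat n m * KtildeInv n m A (B t)).reverse.prod).mulVec
        (cvec n m b)) p = 0 := by
  rintro p (hp | hp)
  · obtain ⟨j, rfl⟩ : ∃ j, i = j + 1 := ⟨i - 1, by omega⟩
    rw [List.ofFn_succ', List.concat_eq_append, List.reverse_append, List.reverse_singleton,
      List.singleton_append, List.prod_cons, ← mulVec_mulVec, ← mulVec_mulVec]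
    exact Mmat_mulVec_block_zero n m _ p hp
  · exact prod_mulVec_support n m A b i B p hp
end
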